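/- Let U be a connected open subset of ℂ with 0 ∈ U and U ≠ ℂ. If U is holomorphically simply connected, then there exists a holomorphic bijection H from U onto the open unit disc D = {z ∈ ℂ : |z| < 1} with holomorphic inverse and with H(0) = 0. -/

import Mathlib

/-- An open set `U ⊆ ℂ` is *holomorphically simply connected* if every
holomorphic function on `U` has a holomorphic antiderivative on `U`. -/
def HolSC (U : Set ℂ) : Prop :=
  ∀ f : ℂ → ℂ, DifferentiableOn ℂ f U →
    ∃ F : ℂ → ℂ, DifferentiableOn ℂ F U ∧ ∀ z ∈ U, HasDerivAt F (f z) z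

open Set Filter Metric Topology

/-- A family of holomorphic functions bounded by `1` on an open set converges locally uniformly
along every ultrafilter. -/
theorem exists_tendstoLocallyUniformlyOn_of_norm_le_one {ι : Type*} {U : Set ℂ} (hU : IsOpen U)
    {F : ι → ℂ → ℂ} (φ : Ultrafilter ι) (hd : ∀ n, DifferentiableOn ℂ (F n) U)
    (hb : ∀ n, ∀ z ∈ U, ‖F n z‖ ≤ 1) :
    ∃ f : ℂ → ℂ, TendstoLocallyUniformlyOn F f φ U := by
  have hlim : ∀ z, ∃ w, z ∈ U → Tendsto (fun n ↦ F n z) φ (𝓝 w) := by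
    intro z
    by_cases hz : z ∈ U
    · obtain ⟨w, -, hw⟩ := (isCompact_closedBall (0 : ℂ) 1).ultrafilter_le_nhds
        (φ.map fun n ↦ F n z) (by
          rw [le_principal_iff]
          exact mem_map.2 (univ_mem' fun n ↦ by simpa using hb n z hz))
      exact ⟨w, fun _ ↦ hw⟩
    · exact ⟨0, fun h ↦ absurd h hz⟩
  choose f hf using hlim
  refine ⟨f, Metric.tendstoLocallyUniformlyOn_iff.2 fun ε hε x hx ↦ ?_⟩
  obtain ⟨r, hr, hrU⟩ := Metric.isOpen_iff.1 hU x hx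
  have hF : ∀ n, ∀ z ∈ ball x r, dist (F n z) (F n x) ≤ 2 / r * dist z x := by
    intro n z hz
    refine Complex.dist_le_div_mul_dist_of_mapsTo_ball ((hd n).mono hrU) (fun y hy ↦ ?_) hz
    rw [mem_closedBall, dist_eq_norm]
    linarith [norm_sub_le (F n y) (F n x), hb n y (hrU hy), hb n x hx]
  have hfx : ∀ z ∈ ball x r, dist (f z) (f x) ≤ 2 / r * dist z x := fun z hz ↦
    le_of_tendsto ((hf z (hrU hz)).dist (hf x hx)) (Eventually.of_forall fun n ↦ hF n z hz)
  have hδ : 0 < min r (r * ε / 6) := by positivity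
  refine ⟨ball x (min r (r * ε / 6)), mem_nhdsWithin_of_mem_nhds (ball_mem_nhds x hδ), ?_⟩
  filter_upwards [Metric.tendsto_nhds.1 (hf x hx) (ε / 3) (by positivity)] with n hn y hy
  have hy' := lt_min_iff.1 (mem_ball.1 hy)
  have hlip : 2 / r * dist y x < ε / 3 := by
    rw [div_mul_eq_mul_div, div_lt_iff₀ hr]
    linarith [hy'.2]
  have h₁ := hF n y hy'.1
  have h₂ := hfx y hy'.1
  have h₃ := dist_triangle4 (f y) (f x) (F n x) (F n y)
  rw [dist_comm (f x), dist_comm (F n x) (F n y)] at h₃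
  linarith

/-- **Hurwitz's theorem**, local form: a zero of a locally uniform limit of nonvanishing
holomorphic functions is not isolated. -/
theorem eventually_eq_zero_of_tendstoLocallyUniformlyOn {ι : Type*} {φ : Filter ι} [φ.NeBot]
    {V : Set ℂ} (hV : IsOpen V) {F : ι → ℂ → ℂ} {f : ℂ → ℂ}
    (hF : TendstoLocallyUniformlyOn F f φ V) (hd : ∀ n, DifferentiableOn ℂ (F n) V)
    (hne : ∀ n, ∀ z ∈ V, F n z ≠ 0) {a : ℂ} (ha : a ∈ V) (hfa : f a = 0) :
    ∀ᶠ z in 𝓝 a, f z = 0 := by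
  have hfd : DifferentiableOn ℂ f V := hF.differentiableOn (Eventually.of_forall hd) hV
  refine (hfd.analyticAt (hV.mem_nhds ha)).eventually_eq_zero_or_eventually_ne_zero.resolve_right
    fun hiso ↦ ?_
  obtain ⟨r, hr, hrV⟩ := nhds_basis_closedBall.mem_iff.1
    (inter_mem (hV.mem_nhds ha) (eventually_nhdsWithin_iff.1 hiso))
  have hballV : closedBall a r ⊆ V := fun z hz ↦ (hrV hz).1
  have hsphere : ∀ z ∈ sphere a r, f z ≠ 0 := fun z hz ↦
    (hrV (sphere_subset_closedBall hz)).2 (ne_of_mem_sphere hz hr.ne')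
  obtain ⟨w, hw, hmin⟩ := (isCompact_sphere a r).exists_isMinOn
    (NormedSpace.sphere_nonempty.2 hr.le)
    (hfd.continuousOn.mono (sphere_subset_closedBall.trans hballV)).norm
  have hm : 0 < ‖f w‖ := norm_pos_iff.2 (hsphere w hw)
  have hunif : TendstoUniformlyOn F f φ (closedBall a r) :=
    (tendstoLocallyUniformlyOn_iff_forall_isCompact hV).1 hF _ hballV (isCompact_closedBall a r)
  obtain ⟨n, hn⟩ := (Metric.tendstoUniformlyOn_iff.1 hunif (‖f w‖ / 2) (by positivity)).exists
  have hlow : ∀ z ∈ sphere a r, ‖f w‖ / 2 ≤ ‖F n z‖ := by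
    intro z hz
    have h₁ := hn z (sphere_subset_closedBall hz)
    have h₂ : ‖f w‖ ≤ ‖f z‖ := hmin hz
    rw [dist_eq_norm] at h₁
    linarith [norm_sub_norm_le (f z) (F n z)]
  have hup : ‖F n a‖ < ‖f w‖ / 2 := by
    simpa [hfa] using hn a (mem_closedBall_self hr.le)
  have hinv : ‖(F n a)⁻¹‖ ≤ (‖f w‖ / 2)⁻¹ := by
    refine Complex.norm_le_of_forall_mem_frontier_norm_le (f := fun z ↦ (F n z)⁻¹)
      (U := ball a r) isBounded_ball ?_ ?_ (subset_closure (mem_ball_self hr))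
    · refine DifferentiableOn.diffContOnCl ?_
      rw [closure_ball a hr.ne']
      exact ((hd n).mono hballV).inv fun z hz ↦ hne n z (hballV hz)
    · intro z hz
      rw [frontier_ball a hr.ne'] at hz
      rw [norm_inv]
      exact inv_anti₀ (by positivity) (hlow z hz)
  rw [norm_inv, inv_le_inv₀ (norm_pos_iff.2 (hne n a ha)) (by positivity)] at hinv
  linarith

/-- On a connected, holomorphically simply connected open set every nonvanishing holomorphic
function has a holomorphic square root. -/
theorem HolSC.exists_sq_eq {U : Set ℂ} (hU : HolSC U) (hUo : IsOpen U) (hUc : IsConnected U)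
    {g : ℂ → ℂ} (hg : DifferentiableOn ℂ g U) (hg₀ : ∀ z ∈ U, g z ≠ 0) :
    ∃ h : ℂ → ℂ, DifferentiableOn ℂ h U ∧ ∀ z ∈ U, h z ^ 2 = g z := by
  obtain ⟨L, hLd, hL⟩ := hU (fun z ↦ deriv g z / g z) ((hg.deriv hUo).div hg hg₀)
  have hq : ∀ z ∈ U, HasDerivAt (fun z ↦ g z * Complex.exp (-L z)) 0 z := by
    intro z hz
    have hgz := (hg.differentiableAt (hUo.mem_nhds hz)).hasDerivAt
    refine (hgz.mul (hL z hz).neg.cexp).congr_deriv ?_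
    have := hg₀ z hz
    field_simp
    ring
  obtain ⟨c, hc⟩ := hUo.exists_is_const_of_deriv_eq_zero hUc.isPreconnected
    (fun z hz ↦ (hq z hz).differentiableAt.differentiableWithinAt) fun z hz ↦ (hq z hz).deriv
  obtain ⟨b, hb⟩ := IsAlgClosed.exists_pow_nat_eq c two_pos
  refine ⟨fun z ↦ b * Complex.exp (L z / 2), (hLd.div_const 2).cexp.const_mul b, fun z hz ↦ ?_⟩
  rw [mul_pow, ← Complex.exp_nat_mul, hb, ← hc z hz, mul_assoc, ← Complex.exp_add]
  have : -L z + ((2 : ℕ) : ℂ) * (L z / 2) = 0 := by push_cast; ring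
  rw [this, Complex.exp_zero, mul_one]

/-- The automorphism of the unit disc that sends `a` to `0`. -/
noncomputable def discAut (a z : ℂ) : ℂ := (z - a) / (1 - (starRingEnd ℂ) a * z)

theorem discAut_self (a : ℂ) : discAut a a = 0 := by simp [discAut]

theorem discAut_denom_ne_zero {a z : ℂ} (ha : ‖a‖ < 1) (hz : ‖z‖ < 1) :
    1 - (starRingEnd ℂ) a * z ≠ 0 := by
  intro h
  have h₁ : ‖(starRingEnd ℂ) a * z‖ = 1 := by rw [← sub_eq_zero.1 h, norm_one]
  rw [norm_mul, RCLike.norm_conj] at h₁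
  nlinarith [norm_nonneg a, norm_nonneg z]

theorem norm_discAut_lt_one {a z : ℂ} (ha : ‖a‖ < 1) (hz : ‖z‖ < 1) : ‖discAut a z‖ < 1 := by
  rw [discAut, norm_div, div_lt_one (norm_pos_iff.2 (discAut_denom_ne_zero ha hz))]
  refine lt_of_pow_lt_pow_left₀ 2 (norm_nonneg _) ?_
  have hid : ‖1 - (starRingEnd ℂ) a * z‖ ^ 2 - ‖z - a‖ ^ 2 =
      (1 - ‖a‖ ^ 2) * (1 - ‖z‖ ^ 2) := by
    simp only [Complex.sq_norm, Complex.normSq_apply, Complex.sub_re, Complex.sub_im,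
      Complex.mul_re, Complex.mul_im, Complex.conj_re, Complex.conj_im, Complex.one_re,
      Complex.one_im]
    ring
  have ha' : 0 < 1 - ‖a‖ ^ 2 := by nlinarith [norm_nonneg a]
  have hz' : 0 < 1 - ‖z‖ ^ 2 := by nlinarith [norm_nonneg z]
  linarith [mul_pos ha' hz']

theorem one_sub_conj_mul_self (a : ℂ) :
    1 - (starRingEnd ℂ) a * a = ((1 - ‖a‖ ^ 2 : ℝ) : ℂ) := by
  rw [Complex.conj_mul']
  push_cast
  rfl

theorem one_sub_conj_mul_self_ne_zero {a : ℂ} (ha : ‖a‖ < 1) :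
    1 - (starRingEnd ℂ) a * a ≠ 0 := discAut_denom_ne_zero ha ha

theorem hasDerivAt_discAut {a z : ℂ} (ha : ‖a‖ < 1) (hz : ‖z‖ < 1) :
    HasDerivAt (discAut a)
      ((1 - (starRingEnd ℂ) a * a) / (1 - (starRingEnd ℂ) a * z) ^ 2) z := by
  have h := ((hasDerivAt_id z).sub_const a).div
    (((hasDerivAt_id z).const_mul ((starRingEnd ℂ) a)).const_sub 1) (discAut_denom_ne_zero ha hz)
  refine h.congr_deriv ?_
  simp only [id]
  ring

theorem injOn_discAut {a : ℂ} (ha : ‖a‖ < 1) : InjOn (discAut a) (ball 0 1) := by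
  intro z hz w hw h
  rw [mem_ball_zero_iff] at hz hw
  rw [discAut, discAut, div_eq_div_iff (discAut_denom_ne_zero ha hz)
    (discAut_denom_ne_zero ha hw)] at h
  refine mul_left_cancel₀ (one_sub_conj_mul_self_ne_zero ha) ?_
  linear_combination h

/-- A conformal embedding of `U` into the unit disc. -/
structure IsDiscEmbedding (U : Set ℂ) (f : ℂ → ℂ) : Prop where
  differentiableOn : DifferentiableOn ℂ f U
  norm_lt_one : ∀ z ∈ U, ‖f z‖ < 1
  injOn : InjOn f U
  deriv_ne_zero : ∀ z ∈ U, deriv f z ≠ 0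

theorem IsDiscEmbedding.hasDerivAt {U : Set ℂ} {f : ℂ → ℂ} (hf : IsDiscEmbedding U f)
    (hU : IsOpen U) {z : ℂ} (hz : z ∈ U) : HasDerivAt f (deriv f z) z :=
  (hf.differentiableOn.differentiableAt (hU.mem_nhds hz)).hasDerivAt

theorem IsDiscEmbedding.hasDerivAt_discAut_comp {U : Set ℂ} {f : ℂ → ℂ}
    (hf : IsDiscEmbedding U f) (hU : IsOpen U) {a : ℂ} (ha : ‖a‖ < 1) {z : ℂ} (hz : z ∈ U) :
    HasDerivAt (fun z ↦ discAut a (f z))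
      ((1 - (starRingEnd ℂ) a * a) / (1 - (starRingEnd ℂ) a * f z) ^ 2 * deriv f z) z :=
  (hasDerivAt_discAut ha (hf.norm_lt_one z hz)).comp z (hf.hasDerivAt hU hz)

theorem IsDiscEmbedding.discAut_comp {U : Set ℂ} {f : ℂ → ℂ} (hf : IsDiscEmbedding U f)
    (hU : IsOpen U) {a : ℂ} (ha : ‖a‖ < 1) : IsDiscEmbedding U fun z ↦ discAut a (f z) where
  differentiableOn z hz :=
    (hf.hasDerivAt_discAut_comp hU ha hz).differentiableAt.differentiableWithinAt
  norm_lt_one z hz := norm_discAut_lt_one ha (hf.norm_lt_one z hz)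
  injOn z hz w hw h := hf.injOn hz hw (injOn_discAut ha
    (mem_ball_zero_iff.2 (hf.norm_lt_one z hz)) (mem_ball_zero_iff.2 (hf.norm_lt_one w hw)) h)
  deriv_ne_zero z hz := by
    rw [(hf.hasDerivAt_discAut_comp hU ha hz).deriv]
    exact mul_ne_zero (div_ne_zero (one_sub_conj_mul_self_ne_zero ha)
      (pow_ne_zero 2 (discAut_denom_ne_zero ha (hf.norm_lt_one z hz)))) (hf.deriv_ne_zero z hz)

/-- The derivative of a holomorphic square root. -/
theorem two_mul_mul_deriv_of_sq_eq {U : Set ℂ} (hU : IsOpen U) {g h : ℂ → ℂ}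
    (hd : DifferentiableOn ℂ h U) (hsq : ∀ z ∈ U, h z ^ 2 = g z) {z : ℂ} (hz : z ∈ U) :
    2 * h z * deriv h z = deriv g z := by
  have h₁ := (hd.differentiableAt (hU.mem_nhds hz)).hasDerivAt.pow 2
  have h₂ : g =ᶠ[𝓝 z] h ^ 2 := by
    filter_upwards [hU.mem_nhds hz] with w hw using (hsq w hw).symm
  rw [h₂.deriv_eq, h₁.deriv]
  simp

theorem IsDiscEmbedding.of_sq_eq {U : Set ℂ} {g h : ℂ → ℂ} (hg : IsDiscEmbedding U g)
    (hU : IsOpen U) (hd : DifferentiableOn ℂ h U) (hsq : ∀ z ∈ U, h z ^ 2 = g z) :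
    IsDiscEmbedding U h where
  differentiableOn := hd
  norm_lt_one z hz := by
    have := hg.norm_lt_one z hz
    rw [← hsq z hz, norm_pow] at this
    exact (pow_lt_one_iff_of_nonneg (norm_nonneg _) two_ne_zero).1 this
  injOn z hz w hw hzw := hg.injOn hz hw (by rw [← hsq z hz, ← hsq w hw, hzw])
  deriv_ne_zero z hz h₀ := hg.deriv_ne_zero z hz (by
    rw [← two_mul_mul_deriv_of_sq_eq hU hd hsq hz, h₀, mul_zero])

/-- A holomorphically simply connected proper domain embeds into the unit disc. -/
theorem HolSC.exists_isDiscEmbedding {U : Set ℂ} (hU : HolSC U) (hUo : IsOpen U)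
    (hUc : IsConnected U) (hUne : U ≠ univ) {p : ℂ} (hp : p ∈ U) :
    ∃ f, IsDiscEmbedding U f ∧ f p = 0 := by
  obtain ⟨a, ha⟩ := (ne_univ_iff_exists_notMem U).1 hUne
  obtain ⟨h, hd, hsq⟩ := hU.exists_sq_eq hUo hUc (g := fun z ↦ z - a)
    (differentiableOn_id.sub_const a)
    fun z hz hza ↦ ha (by rwa [← sub_eq_zero.1 hza])
  have hderiv : ∀ z ∈ U, 2 * h z * deriv h z = 1 := fun z hz ↦ by
    rw [two_mul_mul_deriv_of_sq_eq hUo hd hsq hz, deriv_sub_const_fun, deriv_id'']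
  have hd₀ : ∀ z ∈ U, deriv h z ≠ 0 := fun z hz h₀ ↦ by simpa [h₀] using hderiv z hz
  have hh₀ : ∀ z ∈ U, h z ≠ 0 := fun z hz h₀ ↦ by simpa [h₀] using hderiv z hz
  have himage : h '' U ∈ 𝓝 (h p) := by
    rw [← (hd.analyticAt (hUo.mem_nhds hp)).hasStrictDerivAt.map_nhds_eq (hd₀ p hp)]
    exact image_mem_map (hUo.mem_nhds hp)
  obtain ⟨ε, hε, hball⟩ := Metric.mem_nhds_iff.1 himage
  have hfar : ∀ z ∈ U, ε ≤ ‖h z + h p‖ := by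
    intro z hz
    by_contra! hlt
    obtain ⟨w, hw, hwz⟩ := hball (show -h z ∈ ball (h p) ε by
      rwa [mem_ball, dist_eq_norm, ← norm_neg, neg_sub, sub_neg_eq_add, add_comm])
    obtain rfl : w = z := by
      have h₁ := hsq w hw
      rw [hwz, neg_sq, hsq z hz] at h₁
      linear_combination -h₁
    exact hh₀ w hw (self_eq_neg.1 hwz)
  have hne : ∀ z ∈ U, h z + h p ≠ 0 := fun z hz h₀ ↦ by
    have := hfar z hz
    rw [h₀, norm_zero] at this
    linarith
  have hε' : ((ε / 2 : ℝ) : ℂ) ≠ 0 := by exact_mod_cast (half_pos hε).ne'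
  have hq : ∀ z ∈ U, HasDerivAt (fun z ↦ ((ε / 2 : ℝ) : ℂ) * (h z + h p)⁻¹)
      (((ε / 2 : ℝ) : ℂ) * (-deriv h z / (h z + h p) ^ 2)) z := fun z hz ↦
    ((((hd.differentiableAt (hUo.mem_nhds hz)).hasDerivAt.add_const (h p)).fun_inv
      (hne z hz)).const_mul _)
  have hf : IsDiscEmbedding U fun z ↦ ((ε / 2 : ℝ) : ℂ) * (h z + h p)⁻¹ :=
    { differentiableOn := fun z hz ↦ (hq z hz).differentiableAt.differentiableWithinAt
      norm_lt_one := fun z hz ↦ by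
        rw [norm_mul, norm_inv, Complex.norm_real, Real.norm_of_nonneg (half_pos hε).le,
          ← div_eq_mul_inv, div_lt_one (norm_pos_iff.2 (hne z hz))]
        linarith [hfar z hz]
      injOn := fun z hz w hw hzw ↦ by
        have h₁ : h z = h w := add_right_cancel (inv_injective (mul_left_cancel₀ hε' hzw))
        have h₂ := hsq z hz
        rw [h₁, hsq w hw] at h₂
        exact (sub_left_injective h₂).symm
      deriv_ne_zero := fun z hz ↦ by
        rw [(hq z hz).deriv]
        exact mul_ne_zero hε' (div_ne_zero (neg_ne_zero.2 (hd₀ z hz)) (pow_ne_zero 2 (hne z hz))) }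
  exact ⟨_, hf.discAut_comp hUo (hf.norm_lt_one p hp), discAut_self _⟩

/-- Koebe's square root trick: an embedding that misses a point of the disc can be replaced by one
with larger derivative. -/
theorem HolSC.exists_norm_deriv_lt {U : Set ℂ} (hU : HolSC U) (hUo : IsOpen U)
    (hUc : IsConnected U) {p : ℂ} (hp : p ∈ U) {f : ℂ → ℂ} (hf : IsDiscEmbedding U f)
    (hfp : f p = 0) {w : ℂ} (hw : ‖w‖ < 1) (hwf : w ∉ f '' U) :
    ∃ k, IsDiscEmbedding U k ∧ k p = 0 ∧ ‖deriv f p‖ < ‖deriv k p‖ := by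
  have hg := hf.discAut_comp hUo hw
  obtain ⟨h, hd, hsq⟩ := hU.exists_sq_eq hUo hUc hg.differentiableOn fun z hz h₀ ↦
    hwf ⟨z, hz, injOn_discAut hw (mem_ball_zero_iff.2 (hf.norm_lt_one z hz))
      (mem_ball_zero_iff.2 hw) (h₀.trans (discAut_self w).symm)⟩
  have hh := hg.of_sq_eq hUo hd hsq
  have hb := hh.norm_lt_one p hp
  refine ⟨_, hh.discAut_comp hUo hb, discAut_self _, ?_⟩
  have hw₀ : w ≠ 0 := fun h₀ ↦ hwf ⟨p, hp, hfp.trans h₀.symm⟩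
  have hbw : ‖h p‖ ^ 2 = ‖w‖ := by
    rw [← norm_pow, hsq p hp, hfp]
    simp [discAut]
  have hb₀ : 0 < ‖h p‖ := by
    rw [← norm_pos_iff, ← hbw] at hw₀
    exact (norm_nonneg _).lt_of_ne fun h₀ ↦ by simp [← h₀] at hw₀
  have hsqp := two_mul_mul_deriv_of_sq_eq hUo hd hsq hp
  rw [(hf.hasDerivAt_discAut_comp hUo hw hp).deriv, hfp, mul_zero, sub_zero, one_pow, div_one,
    one_sub_conj_mul_self] at hsqp
  have hnorm := congrArg norm hsqp
  rw [norm_mul, norm_mul, norm_mul, Complex.norm_two, Complex.norm_real, ← hbw,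
    Real.norm_of_nonneg (by nlinarith)] at hnorm
  rw [(hh.hasDerivAt_discAut_comp hUo hb hp).deriv, one_sub_conj_mul_self, norm_mul, norm_div,
    norm_pow, Complex.norm_real, Real.norm_of_nonneg (by nlinarith)]
  have hf₀ : 0 < ‖deriv f p‖ := norm_pos_iff.2 (hf.deriv_ne_zero p hp)
  generalize ‖h p‖ = t at *
  generalize ‖deriv h p‖ = y at *
  generalize ‖deriv f p‖ = x at *
  have ht : 0 < 1 - t ^ 2 := by nlinarith
  have hy : y = (1 - t ^ 2) * (1 + t ^ 2) * x / (2 * t) := by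
    rw [eq_div_iff (by positivity)]
    linear_combination hnorm
  have hval : (1 - t ^ 2) / (1 - t ^ 2) ^ 2 * y = (1 + t ^ 2) / (2 * t) * x := by
    rw [hy]
    field_simp
  rw [hval]
  refine lt_mul_of_one_lt_left hf₀ ((one_lt_div (by positivity)).2 ?_)
  nlinarith [sq_pos_of_pos (sub_pos.2 hb)]

/-- A nondegenerate locally uniform limit of embeddings with value `0` at `p` is again such
an embedding. -/
theorem IsDiscEmbedding.of_tendstoLocallyUniformlyOn {ι : Type*} {φ : Filter ι} [φ.NeBot]
    {U : Set ℂ} (hUo : IsOpen U) (hUc : IsPreconnected U) {p : ℂ} (hp : p ∈ U)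
    {F : ι → ℂ → ℂ} {f : ℂ → ℂ} (hF : ∀ n, IsDiscEmbedding U (F n)) (hFp : ∀ n, F n p = 0)
    (hlim : TendstoLocallyUniformlyOn F f φ U) (hfp : deriv f p ≠ 0) :
    IsDiscEmbedding U f ∧ f p = 0 := by
  have hFd : ∀ n, DifferentiableOn ℂ (F n) U := fun n ↦ (hF n).differentiableOn
  have hd : DifferentiableOn ℂ f U := hlim.differentiableOn (Eventually.of_forall hFd) hUo
  have hp₀ : f p = 0 :=
    tendsto_nhds_unique (hlim.tendsto_at hp) (by simp only [hFp, tendsto_const_nhds])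
  have hle : ∀ z ∈ U, ‖f z‖ ≤ 1 := fun z hz ↦
    le_of_tendsto (hlim.tendsto_at hz).norm
      (Eventually.of_forall fun n ↦ ((hF n).norm_lt_one z hz).le)
  refine ⟨⟨hd, fun z hz ↦ (hle z hz).lt_of_ne fun hz₁ ↦ ?_, fun a ha b hb hab ↦ ?_,
    fun z hz hz₀ ↦ ?_⟩, hp₀⟩
  · have := Complex.norm_eqOn_of_isPreconnected_of_isMaxOn hUc hUo hd hz
      (fun y hy ↦ by simpa [hz₁] using hle y hy) hp
    simp [hp₀, hz₁] at this
  · by_contra hne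
    have hlim' : TendstoLocallyUniformlyOn (fun n z ↦ F n z - F n b) (fun z ↦ f z - f b) φ
        (U \ {b}) := by
      refine (hlim.mono sdiff_subset).sub ?_
      refine TendstoUniformlyOn.tendstoLocallyUniformlyOn ?_
      exact (hlim.tendsto_at hb).tendstoUniformlyOn_const _
    have hev := eventually_eq_zero_of_tendstoLocallyUniformlyOn
      (hUo.sdiff isClosed_singleton) hlim' (fun n ↦ ((hFd n).mono sdiff_subset).sub_const _)
      (fun n z hz h₀ ↦ hz.2 ((hF n).injOn hz.1 hb (sub_eq_zero.1 h₀))) ⟨ha, hne⟩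
      (sub_eq_zero.2 hab)
    have hconst := ((hd.sub_const (f b)).analyticOnNhd
      hUo).eqOn_zero_of_preconnected_of_eventuallyEq_zero hUc ha hev
    refine hfp ?_
    have : f =ᶠ[𝓝 p] fun _ ↦ f b := by
      filter_upwards [hUo.mem_nhds hp] with z hz using sub_eq_zero.1 (hconst hz)
    rw [this.deriv_eq, deriv_const]
  · have hev := eventually_eq_zero_of_tendstoLocallyUniformlyOn hUo
      (hlim.deriv (Eventually.of_forall hFd) hUo) (fun n ↦ (hFd n).deriv hUo)
      (fun n ↦ (hF n).deriv_ne_zero) hz hz₀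
    exact hfp (((hd.deriv hUo).analyticOnNhd
      hUo).eqOn_zero_of_preconnected_of_eventuallyEq_zero hUc hz hev hp)

/-- If `U` embeds into the disc, some embedding has derivative of maximal norm at `p`. -/
theorem exists_isDiscEmbedding_forall_norm_deriv_le {U : Set ℂ} (hUo : IsOpen U)
    (hUc : IsPreconnected U) {p : ℂ} (hp : p ∈ U) (hne : ∃ f, IsDiscEmbedding U f ∧ f p = 0) :
    ∃ f, IsDiscEmbedding U f ∧ f p = 0 ∧
      ∀ k, IsDiscEmbedding U k → k p = 0 → ‖deriv k p‖ ≤ ‖deriv f p‖ := by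
  obtain ⟨g, hg, hgp⟩ := hne
  obtain ⟨r, hr, hrU⟩ := Metric.isOpen_iff.1 hUo p hp
  let S : Set ℝ := {x | ∃ k, IsDiscEmbedding U k ∧ k p = 0 ∧ ‖deriv k p‖ = x}
  have hSne : S.Nonempty := ⟨_, g, hg, hgp, rfl⟩
  have hSb : BddAbove S := by
    refine ⟨1 / r, ?_⟩
    rintro _ ⟨k, hk, hkp, rfl⟩
    refine Complex.norm_deriv_le_div_of_mapsTo_ball (hk.differentiableOn.mono hrU)
      (fun z hz ↦ ?_) hr
    simpa [hkp] using (hk.norm_lt_one z (hrU hz)).le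
  obtain ⟨u, -, hu, huS⟩ := exists_seq_tendsto_sSup hSne hSb
  choose F hF hFp hFu using huS
  obtain ⟨f, hf⟩ := exists_tendstoLocallyUniformlyOn_of_norm_le_one hUo (hyperfilter ℕ)
    (fun n ↦ (hF n).differentiableOn) fun n z hz ↦ ((hF n).norm_lt_one z hz).le
  have hderiv : ‖deriv f p‖ = sSup S := by
    refine tendsto_nhds_unique ((hf.deriv (Eventually.of_forall fun n ↦
      (hF n).differentiableOn) hUo).tendsto_at hp).norm ?_
    simpa only [Function.comp_apply, hFu] using hu.mono_left Nat.hyperfilter_le_atTop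
  have hle : ∀ k, IsDiscEmbedding U k → k p = 0 → ‖deriv k p‖ ≤ ‖deriv f p‖ := fun k hk hkp ↦
    hderiv ▸ le_csSup hSb ⟨k, hk, hkp, rfl⟩
  have hf₀ : deriv f p ≠ 0 := norm_pos_iff.1
    ((norm_pos_iff.2 (hg.deriv_ne_zero p hp)).trans_le (hle g hg hgp))
  obtain ⟨hfe, hfp⟩ := IsDiscEmbedding.of_tendstoLocallyUniformlyOn hUo hUc hp hF hFp hf hf₀
  exact ⟨f, hfe, hfp, hle⟩

/-- The inverse of a surjective embedding into the disc is holomorphic. -/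
theorem IsDiscEmbedding.differentiableOn_leftInverse {U : Set ℂ} (hU : IsOpen U) {f g : ℂ → ℂ}
    (hf : IsDiscEmbedding U f) (hsurj : SurjOn f U (ball 0 1)) (hgf : LeftInvOn g f U) :
    DifferentiableOn ℂ g (ball 0 1) := by
  intro w hw
  obtain ⟨z, hz, rfl⟩ := hsurj hw
  have hgz : g (f z) = z := hgf hz
  have hcont : ContinuousAt g (f z) := by
    rw [ContinuousAt, hgz, ← (hf.differentiableOn.analyticAt
      (hU.mem_nhds hz)).hasStrictDerivAt.map_nhds_eq (hf.deriv_ne_zero z hz), tendsto_map'_iff]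
    refine tendsto_id.congr' ?_
    filter_upwards [hU.mem_nhds hz] with y hy using (hgf hy).symm
  have hright : ∀ᶠ y in 𝓝 (f z), f (g y) = y := by
    filter_upwards [isOpen_ball.mem_nhds hw] with y hy
    obtain ⟨x, hx, rfl⟩ := hsurj hy
    rw [hgf hx]
  refine (HasDerivAt.of_local_left_inverse hcont ?_ (hf.deriv_ne_zero z hz)
    hright).differentiableAt.differentiableWithinAt
  rw [hgz]
  exact hf.hasDerivAt hU hz

/-- **Riemann Mapping Theorem, normalized form.** A connected open proper subset
of `ℂ` containing `0` that is holomorphically simply connected admits a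
biholomorphism onto the open unit disc taking `0` to `0`. -/
theorem riemann_mapping_normalized (U : Set ℂ) (hUopen : IsOpen U)
    (hUconn : IsConnected U) (h0 : (0 : ℂ) ∈ U) (hUne : U ≠ Set.univ)
    (hU : HolSC U) :
    ∃ H G : ℂ → ℂ,
      DifferentiableOn ℂ H U ∧
      DifferentiableOn ℂ G (Metric.ball (0 : ℂ) 1) ∧
      Set.MapsTo H U (Metric.ball (0 : ℂ) 1) ∧
      Set.MapsTo G (Metric.ball (0 : ℂ) 1) U ∧
      (∀ z ∈ U, G (H z) = z) ∧
      (∀ w ∈ Metric.ball (0 : ℂ) 1, H (G w) = w) ∧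
      H 0 = 0 := by
  obtain ⟨f, hf, hf₀, hmax⟩ := exists_isDiscEmbedding_forall_norm_deriv_le hUopen
    hUconn.isPreconnected h0 (hU.exists_isDiscEmbedding hUopen hUconn hUne h0)
  have hsurj : Set.SurjOn f U (Metric.ball 0 1) := by
    intro w hw
    by_contra hwf
    obtain ⟨k, hk, hk₀, hlt⟩ := hU.exists_norm_deriv_lt hUopen hUconn h0 hf hf₀
      (mem_ball_zero_iff.1 hw) hwf
    exact (hmax k hk hk₀).not_gt hlt
  have hinv : Set.LeftInvOn (Function.invFunOn f U) f U := hf.injOn.leftInvOn_invFunOn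
  refine ⟨f, Function.invFunOn f U, hf.differentiableOn,
    hf.differentiableOn_leftInverse hUopen hsurj hinv,
    fun z hz ↦ mem_ball_zero_iff.2 (hf.norm_lt_one z hz),
    fun w hw ↦ Function.invFunOn_mem (hsurj hw), hinv,
    fun w hw ↦ Function.invFunOn_eq (hsurj hw), hf₀⟩
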